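/- Let (F_t)_{t=0}^T be a filtration on a probability space. For each t ∈ [T] and i ∈ [m], let p_t ∈ Δ_m and ξ_{t,i} ∈ [0,1] be F_{t−1}-measurable, let i_t ∈ [m] have conditional law p_t given F_{t−1}, and let ξ̂_{t,i} ∈ [0,1] be a random variable with E[ξ̂_{t,i} | F_{t−1}] = ξ_{t,i} that is conditionally independent of i_t given F_{t−1}; all variables at step t are F_t-measurable. Let {γ_t}_{t=1}^T be a fixed non-increasing sequence with γ_t ≥ 0, define the IX estimator ξ̃_{t,i} = (ξ̂_{t,i}/(p_{t,i} + γ_t))·1[i_t = i], and let α_{t,i} ≥ 0 be F_{t−1}-measurable random variables with α_{t,i} ≤ 2γ_t for all t, i. Then for any δ ∈ (0,1), with probability at least 1 − δ, Σ_{t=1}^T Σ_{i=1}^m α_{t,i}(ξ̃_{t,i} − ξ_{t,i}) ≤ ln(1/δ). -/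

import Mathlib

open MeasureTheory ProbabilityTheory
open scoped BigOperators

/-!
The process `M_n = ∏_{t ≤ n} exp (∑ᵢ α_{t,i} (ξ̃_{t,i} - ξ_{t,i}))` satisfies `E[M_n] ≤ 1`, and Markov's
inequality applied to `M_T` gives the claim.

For one step, only the coordinate `i = i_t` contributes to `∑ᵢ α_{t,i} ξ̃_{t,i}`, so convexity of `exp`
on `[0, b]` and `ξ̂ ∈ [0,1]` give
`exp (∑ᵢ αᵢ ξ̃ᵢ) ≤ 1 + ∑ᵢ (exp (αᵢ / (pᵢ + γ)) - 1) * (ξ̂ᵢ * 1[i_t = i])`.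
Conditional independence replaces `ξ̂ᵢ * 1[i_t = i]` by `ξᵢ pᵢ` in conditional mean
(`condExp_mul_of_condIndepFun`), and the scalar inequality `p (exp (a / (p + g)) - 1) ≤ a` for
`0 ≤ a ≤ 2 g` (`mul_exp_sub_one_le`), which is where the bias `γ` is used, bounds the
conditional mean by `1 + ∑ᵢ αᵢ ξᵢ ≤ exp (∑ᵢ αᵢ ξᵢ)`. This form of the argument covers `pᵢ = 0` and
`γ = 0` without a case distinction on null events, and keeps all quantities bounded.
-/

/-- For `p > 0` this is `a / (p + g) ≤ 2x / (x + 2) ≤ log (1 + x)` with `x = a / p`. -/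
lemma mul_exp_sub_one_le {p g a : ℝ} (hp : 0 ≤ p) (hg : 0 ≤ g) (ha : 0 ≤ a) (hag : a ≤ 2 * g) :
    p * (Real.exp (a / (p + g)) - 1) ≤ a := by
  rcases hp.eq_or_lt with rfl | hp
  · simpa using ha
  have h1 : a / (p + g) ≤ Real.log (1 + a / p) := by
    refine le_trans ?_ (Real.le_log_one_add_of_nonneg (div_nonneg ha hp.le))
    have : 2 * (a / p) / (a / p + 2) = 2 * a / (a + 2 * p) := by
      field_simp
    rw [this, div_le_div_iff₀ (by linarith) (by linarith)]
    nlinarith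
  have hpos : 0 < 1 + a / p := by positivity
  have h2 := (Real.le_log_iff_exp_le hpos).1 h1
  calc p * (Real.exp (a / (p + g)) - 1) ≤ p * (a / p) := by
        apply mul_le_mul_of_nonneg_left _ hp.le
        linarith
    _ = a := by field_simp

/-- The graph of `exp` lies below its chord on the segment between `0` and `b`. -/
lemma exp_mul_le_chord {x b : ℝ} (hx0 : 0 ≤ x) (hx1 : x ≤ 1) :
    Real.exp (x * b) ≤ 1 + x * (Real.exp b - 1) := by
  have h := convexOn_exp.2 (Set.mem_univ (0 : ℝ)) (Set.mem_univ b) (sub_nonneg.2 hx1) hx0 (by ring)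
  simp only [smul_eq_mul, mul_zero, zero_add, Real.exp_zero] at h
  linarith

/-- Conditional expectation is multiplicative on conditionally independent variables: for almost
every `ω` they are independent under the regular conditional law `condExpKernel μ G ω`. -/
lemma condExp_mul_of_condIndepFun {Ω : Type*} {G : MeasurableSpace Ω}
    [m0 : MeasurableSpace Ω] [StandardBorelSpace Ω]
    {μ : Measure Ω} [IsProbabilityMeasure μ] (hG : G ≤ m0)
    {X Y : Ω → ℝ} (hX : Measurable X) (hY : Measurable Y) (hXi : Integrable X μ)
    (hYi : Integrable Y μ) (hXYi : Integrable (fun ω => X ω * Y ω) μ)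
    (h : CondIndepFun G hG X Y μ) :
    μ[(fun ω => X ω * Y ω) | G] =ᵐ[μ] fun ω => (μ[X | G]) ω * (μ[Y | G]) ω := by
  have h1 := ae_of_ae_trim hG ((condIndepFun_iff_map_prod_eq_prod_map_map hX hY).1 h)
  filter_upwards [h1, condExp_ae_eq_integral_condExpKernel hG hXi,
    condExp_ae_eq_integral_condExpKernel hG hYi,
    condExp_ae_eq_integral_condExpKernel hG hXYi] with ω h1 hx hy hxy
  rw [hx, hy, hxy]
  rw [Kernel.map_apply _ (hX.prodMk hY), Kernel.prod_apply, Kernel.map_apply _ hX,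
    Kernel.map_apply _ hY] at h1
  have hi := (indepFun_iff_map_prod_eq_prod_map_map hX.aemeasurable hY.aemeasurable).2 h1
  exact hi.integral_fun_mul_eq_mul_integral hX.aestronglyMeasurable hY.aestronglyMeasurable

/-- Defining property of `μ[Y | G]`, tested against a bounded `G`-measurable `K` and phrased for a
version `W` of `μ[Y | G]`. -/
lemma integral_mul_eq_of_condExp_ae_eq {Ω : Type*} {G : MeasurableSpace Ω}
    [m0 : MeasurableSpace Ω]
    {μ : Measure Ω} [IsProbabilityMeasure μ] (hG : G ≤ m0)
    {K Y W : Ω → ℝ} (hK : Measurable[G] K) (hY : Integrable Y μ)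
    {C : ℝ} (hKC : ∀ ω, ‖K ω‖ ≤ C) (h : μ[Y | G] =ᵐ[μ] W) :
    ∫ ω, K ω * Y ω ∂μ = ∫ ω, K ω * W ω ∂μ := by
  have h1 := condExp_stronglyMeasurable_mul_of_bound hG hK.stronglyMeasurable hY C
    (Filter.Eventually.of_forall hKC)
  calc ∫ ω, K ω * Y ω ∂μ = ∫ ω, (μ[K * Y | G]) ω ∂μ := (integral_condExp hG).symm
    _ = ∫ ω, K ω * W ω ∂μ := by
      apply integral_congr_ae
      filter_upwards [h1, h] with ω h1 h2
      rw [h1, Pi.mul_apply, h2]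

lemma integrable_of_abs_le {Ω : Type*} [m0 : MeasurableSpace Ω]
    {μ : Measure Ω} [IsProbabilityMeasure μ] {f : Ω → ℝ} (hf : Measurable f) {C : ℝ}
    (h : ∀ ω, |f ω| ≤ C) : Integrable f μ :=
  Integrable.of_bound hf.aestronglyMeasurable C (Filter.Eventually.of_forall h)

/-- If only the coordinate `j` is active, the exponential of the IX sum is at most the linear
expression in `x` whose conditional mean is computable. -/
lemma exp_sum_le {m : ℕ} (j : Fin m) (a x q e : Fin m → ℝ)
    (hx : ∀ i, x i ∈ Set.Icc (0 : ℝ) 1) :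
    Real.exp (∑ i, a i * (x i / q i * (if j = i then 1 else 0) - e i)) ≤
      Real.exp (-∑ i, a i * e i) *
        (1 + ∑ i, (Real.exp (a i / q i) - 1) * (x i * (if j = i then 1 else 0))) := by
  have h1 : ∑ i, a i * (x i / q i * (if j = i then 1 else 0) - e i) =
      -∑ i, a i * e i + x j * (a j / q j) := by
    simp only [mul_sub, Finset.sum_sub_distrib, mul_ite, mul_one, mul_zero, Finset.sum_ite_eq,
      Finset.mem_univ, if_true]
    ring
  rw [h1, Real.exp_add]
  refine mul_le_mul_of_nonneg_left ?_ (Real.exp_pos _).le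
  refine (exp_mul_le_chord (hx j).1 (hx j).2).trans (le_of_eq ?_)
  simp [mul_comm]

/-- The one-step supermartingale inequality, tested against a bounded nonnegative `G`-measurable
weight `H`, where `G` is the past. -/
lemma integral_step_le {Ω : Type*} {G : MeasurableSpace Ω}
    [m0 : MeasurableSpace Ω] [StandardBorelSpace Ω]
    {μ : Measure Ω} [IsProbabilityMeasure μ] (hG : G ≤ m0) {m : ℕ}
    {p : Ω → Fin m → ℝ} (hp : Measurable[G] p) (hp0 : ∀ ω, p ω ∈ stdSimplex ℝ (Fin m))
    {ξ : Fin m → Ω → ℝ} (hξ : ∀ i, Measurable[G] (ξ i)) (hξ01 : ∀ i ω, ξ i ω ∈ Set.Icc (0 : ℝ) 1)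
    {J : Ω → Fin m} (hJ : Measurable J)
    (hlaw : ∀ i, μ[(fun ω => if J ω = i then (1 : ℝ) else 0) | G] =ᵐ[μ] fun ω => p ω i)
    {X : Fin m → Ω → ℝ} (hX : ∀ i, Measurable (X i)) (hX01 : ∀ i ω, X i ω ∈ Set.Icc (0 : ℝ) 1)
    (hmean : ∀ i, μ[X i | G] =ᵐ[μ] ξ i) (hind : ∀ i, CondIndepFun G hG (X i) J μ)
    {g : ℝ} (hg : 0 ≤ g) {a : Fin m → Ω → ℝ} (ha : ∀ i, Measurable[G] (a i))
    (ha2 : ∀ i ω, a i ω ∈ Set.Icc (0 : ℝ) (2 * g))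
    {H : Ω → ℝ} (hH : Measurable[G] H) (hH0 : ∀ ω, 0 ≤ H ω) {C : ℝ} (hHC : ∀ ω, H ω ≤ C) :
    ∫ ω, H ω * Real.exp (∑ i, a i ω *
      (X i ω / (p ω i + g) * (if J ω = i then 1 else 0) - ξ i ω)) ∂μ ≤ ∫ ω, H ω ∂μ := by
  have hpi : ∀ i, Measurable[G] fun ω => p ω i := fun i => (measurable_pi_apply i).comp hp
  have hpp : ∀ ω i, 0 ≤ p ω i := fun ω i => (hp0 ω).1 i
  have hp1 : ∀ ω i, p ω i ≤ 1 := fun ω i => by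
    rw [← (hp0 ω).2]
    exact Finset.single_le_sum (fun k _ => hpp ω k) (Finset.mem_univ i)
  set E : Ω → ℝ := fun ω => Real.exp (-∑ i, a i ω * ξ i ω) with hE
  set B : Fin m → Ω → ℝ := fun i ω => Real.exp (a i ω / (p ω i + g)) - 1 with hB
  set Y : Fin m → Ω → ℝ := fun i ω => X i ω * (if J ω = i then 1 else 0) with hYdef
  have hEm : Measurable[G] E :=
    Real.measurable_exp.comp (Finset.measurable_sum _ fun i _ => (ha i).mul (hξ i)).neg
  have hBm : ∀ i, Measurable[G] (B i) := fun i =>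
    (Real.measurable_exp.comp ((ha i).div ((hpi i).add_const g))).sub_const 1
  have hind1 : ∀ i, Measurable fun ω => if J ω = i then (1 : ℝ) else 0 := fun i =>
    Measurable.ite (hJ (measurableSet_singleton i)) measurable_const measurable_const
  have hYm : ∀ i, Measurable (Y i) := fun i => (hX i).mul (hind1 i)
  have hE0 : ∀ ω, 0 ≤ E ω := fun ω => (Real.exp_pos _).le
  have hs0 : ∀ ω, 0 ≤ ∑ i, a i ω * ξ i ω := fun ω =>
    Finset.sum_nonneg fun i _ => mul_nonneg (ha2 i ω).1 (hξ01 i ω).1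
  have hE1 : ∀ ω, E ω ≤ 1 := fun ω => Real.exp_le_one_iff.2 (neg_nonpos.2 (hs0 ω))
  have hB0 : ∀ i ω, 0 ≤ B i ω := fun i ω => by
    have : 0 ≤ a i ω / (p ω i + g) := div_nonneg (ha2 i ω).1 (add_nonneg (hpp ω i) hg)
    have := Real.one_le_exp this
    simp only [hB]; linarith
  have hB2 : ∀ i ω, B i ω ≤ Real.exp 2 := fun i ω => by
    have h2 : a i ω / (p ω i + g) ≤ 2 :=
      div_le_of_le_mul₀ (add_nonneg (hpp ω i) hg) (by norm_num)
        (by have := (ha2 i ω).2; have := hpp ω i; linarith)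
    have := Real.exp_le_exp.2 h2
    simp only [hB]; linarith
  have hY0 : ∀ i ω, 0 ≤ Y i ω := fun i ω =>
    mul_nonneg (hX01 i ω).1 (by split_ifs <;> norm_num)
  have hY1 : ∀ i ω, Y i ω ≤ 1 := fun i ω =>
    mul_le_one₀ (hX01 i ω).2 (by split_ifs <;> norm_num) (by split_ifs <;> norm_num)
  have hYi : ∀ i, Integrable (Y i) μ := fun i => integrable_of_abs_le (hYm i) (C := 1)
    fun ω => by rw [abs_of_nonneg (hY0 i ω)]; exact hY1 i ω
  have hXi : ∀ i, Integrable (X i) μ := fun i => integrable_of_abs_le (hX i) (C := 1)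
    fun ω => by rw [abs_of_nonneg (hX01 i ω).1]; exact (hX01 i ω).2
  have h1i : ∀ i, Integrable (fun ω => if J ω = i then (1 : ℝ) else 0) μ := fun i =>
    integrable_of_abs_le (hind1 i) (C := 1) fun ω => by split_ifs <;> norm_num
  have hYce : ∀ i, μ[Y i | G] =ᵐ[μ] fun ω => ξ i ω * p ω i := fun i => by
    have hci := (hind i).comp (φ := id) (ψ := fun k => if k = i then (1 : ℝ) else 0)
      measurable_id (measurable_of_finite _)
    have := condExp_mul_of_condIndepFun hG (hX i) (hind1 i) (hXi i) (h1i i) (hYi i) hci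
    filter_upwards [this, hmean i, hlaw i] with ω h1 h2 h3
    rw [h1, h2, h3]
  set K : Fin m → Ω → ℝ := fun i ω => H ω * E ω * B i ω with hKdef
  have hKm : ∀ i, Measurable[G] (K i) := fun i => (hH.mul hEm).mul (hBm i)
  have hHE0 : ∀ ω, 0 ≤ H ω * E ω := fun ω => mul_nonneg (hH0 ω) (hE0 ω)
  have hHEC : ∀ ω, H ω * E ω ≤ C := fun ω =>
    (mul_le_of_le_one_right (hH0 ω) (hE1 ω)).trans (hHC ω)
  have hKC : ∀ i ω, ‖K i ω‖ ≤ C * Real.exp 2 := fun i ω => by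
    rw [Real.norm_eq_abs, abs_of_nonneg (mul_nonneg (hHE0 ω) (hB0 i ω))]
    exact mul_le_mul (hHEC ω) (hB2 i ω) (hB0 i ω) ((hHE0 ω).trans (hHEC ω))
  have hbdd : ∀ {W : Ω → ℝ}, Measurable W → (∀ ω, 0 ≤ W ω) → (∀ ω, W ω ≤ 1) → ∀ i,
      Integrable (fun ω => K i ω * W ω) μ := fun {W} hW hW0 hW1 i =>
    integrable_of_abs_le (((hKm i).mono hG le_rfl).mul hW) (C := C * Real.exp 2) fun ω => by
      rw [abs_mul, abs_of_nonneg (hW0 ω)]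
      exact (mul_le_of_le_one_right (abs_nonneg _) (hW1 ω)).trans (hKC i ω)
  have hKY : ∀ i, Integrable (fun ω => K i ω * Y i ω) μ := fun i => hbdd (hYm i) (hY0 i) (hY1 i) i
  have hKP : ∀ i, Integrable (fun ω => K i ω * (ξ i ω * p ω i)) μ := fun i =>
    hbdd (((hξ i).mul (hpi i)).mono hG le_rfl) (fun ω => mul_nonneg (hξ01 i ω).1 (hpp ω i))
      (fun ω => mul_le_one₀ (hξ01 i ω).2 (hpp ω i) (hp1 ω i)) i
  have hHEi : Integrable (fun ω => H ω * E ω) μ :=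
    integrable_of_abs_le ((hH.mul hEm).mono hG le_rfl) (C := C) fun ω => by
      rw [abs_of_nonneg (hHE0 ω)]; exact hHEC ω
  have hHi : Integrable H μ :=
    integrable_of_abs_le (hH.mono hG le_rfl) (C := C) fun ω => by
      rw [abs_of_nonneg (hH0 ω)]; exact hHC ω
  calc ∫ ω, H ω * Real.exp (∑ i, a i ω *
      (X i ω / (p ω i + g) * (if J ω = i then 1 else 0) - ξ i ω)) ∂μ
      ≤ ∫ ω, (H ω * E ω + ∑ i, K i ω * Y i ω) ∂μ := by
        refine integral_mono_of_nonneg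
          (Filter.Eventually.of_forall fun ω => mul_nonneg (hH0 ω) (Real.exp_pos _).le)
          (hHEi.add (integrable_finsetSum _ fun i _ => hKY i))
          (Filter.Eventually.of_forall fun ω => ?_)
        have h := mul_le_mul_of_nonneg_left (exp_sum_le (J ω) (fun i => a i ω) (fun i => X i ω)
          (fun i => p ω i + g) (fun i => ξ i ω) (fun i => hX01 i ω)) (hH0 ω)
        refine h.trans (le_of_eq ?_)
        simp only [hKdef, hE, hB, hYdef, mul_add, Finset.mul_sum, mul_one, mul_assoc]
    _ = ∫ ω, (H ω * E ω + ∑ i, K i ω * (ξ i ω * p ω i)) ∂μ := by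
        rw [integral_add hHEi (integrable_finsetSum _ fun i _ => hKY i),
          integral_add hHEi (integrable_finsetSum _ fun i _ => hKP i),
          integral_finsetSum _ fun i _ => hKY i, integral_finsetSum _ fun i _ => hKP i]
        congr 1
        exact Finset.sum_congr rfl fun i _ =>
          integral_mul_eq_of_condExp_ae_eq hG (hKm i) (hYi i) (hKC i) (hYce i)
    _ ≤ ∫ ω, H ω ∂μ := by
        refine integral_mono (hHEi.add (integrable_finsetSum _ fun i _ => hKP i)) hHi fun ω => ?_
        have h1 : ∑ i, K i ω * (ξ i ω * p ω i) ≤ H ω * E ω * ∑ i, a i ω * ξ i ω := by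
          rw [Finset.mul_sum]
          refine Finset.sum_le_sum fun i _ => ?_
          have h2 := mul_exp_sub_one_le (hpp ω i) hg (ha2 i ω).1 (ha2 i ω).2
          have h3 := mul_le_mul_of_nonneg_left
            (mul_le_mul_of_nonneg_right h2 (hξ01 i ω).1) (hHE0 ω)
          refine le_trans (le_of_eq ?_) h3
          simp only [hKdef, hB]; ring
        have h4 : E ω * (1 + ∑ i, a i ω * ξ i ω) ≤ 1 := by
          have h5 := Real.add_one_le_exp (∑ i, a i ω * ξ i ω)
          calc E ω * (1 + ∑ i, a i ω * ξ i ω)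
              ≤ E ω * Real.exp (∑ i, a i ω * ξ i ω) :=
                mul_le_mul_of_nonneg_left (by linarith) (hE0 ω)
            _ = 1 := by simp only [hE]; rw [← Real.exp_add]; simp
        have h6 := mul_le_mul_of_nonneg_left h4 (hH0 ω)
        simp only
        linarith [mul_assoc (H ω) (E ω) (1 + ∑ i, a i ω * ξ i ω),
          mul_add (H ω * E ω) 1 (∑ i, a i ω * ξ i ω)]

/-- High-probability concentration of the Implicit-eXploration estimator:
with `F_{t−1}`-measurable `p_t ∈ Δ_m`, `ξ_{t,i} ∈ [0,1]`, indices `i_t` with conditional law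
`p_t`, estimators `ξ̂_{t,i} ∈ [0,1]` with conditional mean `ξ_{t,i}` conditionally
independent of `i_t` given `F_{t−1}`, a fixed non-increasing sequence `γ_t ≥ 0`, IX
estimators `ξ̃_{t,i} = (ξ̂_{t,i}/(p_{t,i}+γ_t))·1[i_t = i]`, and `F_{t−1}`-measurable
`0 ≤ α_{t,i} ≤ 2γ_t`, for any `δ ∈ (0,1)`, with probability at least `1 − δ`,
`Σₜ Σᵢ α_{t,i}(ξ̃_{t,i} − ξ_{t,i}) ≤ ln(1/δ)`. -/
theorem stmt5 {Ω : Type*} [m0 : MeasurableSpace Ω] [StandardBorelSpace Ω]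
    (μ : Measure Ω) [IsProbabilityMeasure μ]
    (T m : ℕ) (hm : 1 ≤ m)
    (F : ℕ → MeasurableSpace Ω) (hFmono : Monotone F) (hFle : ∀ t, F t ≤ m0)
    (p : ℕ → Ω → Fin m → ℝ)
    (hp_meas : ∀ t ∈ Finset.Icc 1 T, Measurable[F (t - 1)] (p t))
    (hp_simplex : ∀ t ∈ Finset.Icc 1 T, ∀ ω, p t ω ∈ stdSimplex ℝ (Fin m))
    (ξ : ℕ → Fin m → Ω → ℝ)
    (hξ_meas : ∀ t ∈ Finset.Icc 1 T, ∀ i, Measurable[F (t - 1)] (ξ t i))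
    (hξ01 : ∀ t ∈ Finset.Icc 1 T, ∀ i ω, ξ t i ω ∈ Set.Icc (0 : ℝ) 1)
    (it : ℕ → Ω → Fin m)
    (hit_adapted : ∀ t ∈ Finset.Icc 1 T, Measurable[F t] (it t))
    (hit_law : ∀ t ∈ Finset.Icc 1 T, ∀ i,
      μ[(fun ω => if it t ω = i then (1 : ℝ) else 0) | F (t - 1)] =ᵐ[μ] fun ω => p t ω i)
    (ξhat : ℕ → Fin m → Ω → ℝ)
    (hξhat_adapted : ∀ t ∈ Finset.Icc 1 T, ∀ i, Measurable[F t] (ξhat t i))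
    (hξhat01 : ∀ t ∈ Finset.Icc 1 T, ∀ i ω, ξhat t i ω ∈ Set.Icc (0 : ℝ) 1)
    (hξhat_mean : ∀ t ∈ Finset.Icc 1 T, ∀ i, μ[ξhat t i | F (t - 1)] =ᵐ[μ] ξ t i)
    (hcondindep : ∀ t ∈ Finset.Icc 1 T, ∀ i,
      CondIndepFun (F (t - 1)) (hFle (t - 1)) (ξhat t i) (it t) μ)
    (γ : ℕ → ℝ) (hγ_nonneg : ∀ t, 0 ≤ γ t) (hγ_mono : Antitone γ)
    (ξtilde : ℕ → Fin m → Ω → ℝ)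
    (hξtilde : ∀ t i ω, ξtilde t i ω =
      (ξhat t i ω / (p t ω i + γ t)) * (if it t ω = i then 1 else 0))
    (α : ℕ → Fin m → Ω → ℝ)
    (hα_meas : ∀ t ∈ Finset.Icc 1 T, ∀ i, Measurable[F (t - 1)] (α t i))
    (hα : ∀ t ∈ Finset.Icc 1 T, ∀ i ω, α t i ω ∈ Set.Icc (0 : ℝ) (2 * γ t)) :
    ∀ δ : ℝ, δ ∈ Set.Ioo (0 : ℝ) 1 →
      ENNReal.ofReal (1 - δ) ≤
        μ {ω | ∑ t ∈ Finset.Icc 1 T, ∑ i, α t i ω * (ξtilde t i ω - ξ t i ω) ≤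
          Real.log (1 / δ)} := by
  intro δ hδ
  set L : ℕ → Ω → ℝ := fun t ω => ∑ i, α t i ω * (ξtilde t i ω - ξ t i ω) with hL
  have hLm : ∀ t ∈ Finset.Icc 1 T, Measurable[F t] (L t) := fun t ht => by
    have hle : F (t - 1) ≤ F t := hFmono (Nat.sub_le t 1)
    refine Finset.measurable_sum _ fun i _ => ?_
    refine ((hα_meas t ht i).mono hle le_rfl).mul
      (Measurable.sub ?_ ((hξ_meas t ht i).mono hle le_rfl))
    have he : ξtilde t i = fun ω =>
        (ξhat t i ω / (p t ω i + γ t)) * (if it t ω = i then 1 else 0) :=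
      funext fun ω => hξtilde t i ω
    rw [he]
    have hpi : Measurable[F t] fun ω => p t ω i :=
      (measurable_pi_apply i).comp ((hp_meas t ht).mono hle le_rfl)
    exact ((hξhat_adapted t ht i).div (hpi.add_const _)).mul
      (Measurable.ite (hit_adapted t ht (measurableSet_singleton i)) measurable_const
        measurable_const)
  have hL2 : ∀ t ∈ Finset.Icc 1 T, ∀ ω, L t ω ≤ 2 := fun t ht ω => by
    have hpp : ∀ i, 0 ≤ p t ω i := (hp_simplex t ht ω).1
    have h1 : L t ω ≤ ∑ i, (if it t ω = i then (2 : ℝ) else 0) := by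
      refine Finset.sum_le_sum fun i _ => ?_
      have ha := hα t ht i ω
      have hx := hξhat01 t ht i ω
      have h0 : 0 ≤ α t i ω * ξ t i ω := mul_nonneg ha.1 (hξ01 t ht i ω).1
      rw [hξtilde, mul_sub]
      split_ifs
      · have h2 : α t i ω * ξhat t i ω / (p t ω i + γ t) ≤ 2 := by
          refine div_le_of_le_mul₀ (add_nonneg (hpp i) (hγ_nonneg t)) (by norm_num) ?_
          have := mul_le_of_le_one_right ha.1 hx.2
          have := ha.2
          have := hpp i
          linarith
        rw [mul_one, ← mul_div_assoc]
        linarith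
      · simp only [mul_zero]
        linarith
    simpa using h1
  -- `M n` is the product of the one-step exponentials, written as the exponential of a sum.
  set M : ℕ → Ω → ℝ := fun n ω => Real.exp (∑ t ∈ Finset.Icc 1 n, L t ω) with hM
  have hMm : ∀ n ≤ T, Measurable[F n] (M n) := fun n hn =>
    Real.measurable_exp.comp (Finset.measurable_sum _ fun t ht => by
      rw [Finset.mem_Icc] at ht
      exact (hLm t (Finset.mem_Icc.2 ⟨ht.1, ht.2.trans hn⟩)).mono (hFmono ht.2) le_rfl)
  have hMC : ∀ n ≤ T, ∀ ω, M n ω ≤ Real.exp (n * 2) := fun n hn ω => by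
    refine Real.exp_le_exp.2 ((Finset.sum_le_card_nsmul _ _ 2 fun t ht => ?_).trans ?_)
    · rw [Finset.mem_Icc] at ht
      exact hL2 t (Finset.mem_Icc.2 ⟨ht.1, ht.2.trans hn⟩) ω
    · simp
  have hMint : ∀ n ≤ T, ∫ ω, M n ω ∂μ ≤ 1 := by
    intro n
    induction n with
    | zero => intro _; simp [hM]
    | succ n ih =>
      intro hn
      have ht : n + 1 ∈ Finset.Icc 1 T := Finset.mem_Icc.2 ⟨by omega, hn⟩
      refine le_trans ?_ (ih (by omega))
      have hstep := integral_step_le (hFle n) (hp_meas (n + 1) ht) (hp_simplex (n + 1) ht)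
        (hξ_meas (n + 1) ht) (hξ01 (n + 1) ht)
        ((hit_adapted (n + 1) ht).mono (hFle (n + 1)) le_rfl) (hit_law (n + 1) ht)
        (fun i => (hξhat_adapted (n + 1) ht i).mono (hFle (n + 1)) le_rfl)
        (hξhat01 (n + 1) ht) (hξhat_mean (n + 1) ht) (hcondindep (n + 1) ht)
        (hγ_nonneg (n + 1)) (hα_meas (n + 1) ht) (hα (n + 1) ht)
        (hMm n (by omega)) (fun ω => (Real.exp_pos _).le) (hMC n (by omega))
      refine le_trans (le_of_eq ?_) hstep
      refine integral_congr_ae (Filter.Eventually.of_forall fun ω => ?_)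
      simp only [hM, hL, ← hξtilde]
      rw [Finset.sum_Icc_succ_top (by omega), Real.exp_add]
  have hMTm : Measurable (M T) := (hMm T le_rfl).mono (hFle T) le_rfl
  have hMTi : Integrable (M T) μ := integrable_of_abs_le hMTm fun ω => by
    rw [abs_of_nonneg (Real.exp_pos _).le]; exact hMC T le_rfl ω
  have hmarkov := mul_meas_ge_le_integral_of_nonneg
    (Filter.Eventually.of_forall fun ω => (Real.exp_pos (∑ t ∈ Finset.Icc 1 T, L t ω)).le)
    hMTi (1 / δ)
  have hbad : μ.real {ω | 1 / δ ≤ M T ω} ≤ δ := by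
    have h1 := hmarkov.trans (hMint T le_rfl)
    rw [one_div, inv_mul_le_iff₀ hδ.1, mul_one] at h1
    simpa [one_div] using h1
  have hbm : MeasurableSet {ω | 1 / δ ≤ M T ω} := measurableSet_le measurable_const hMTm
  have hgood : 1 - δ ≤ μ.real {ω | 1 / δ ≤ M T ω}ᶜ := by
    rw [probReal_compl_eq_one_sub hbm]; linarith
  refine (ENNReal.ofReal_le_ofReal hgood).trans ?_
  rw [ofReal_measureReal]
  refine measure_mono fun ω hω => ?_
  have h1 : M T ω < 1 / δ := not_le.1 hω
  exact ((Real.lt_log_iff_exp_lt (one_div_pos.2 hδ.1)).2 h1).le
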